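/- arXiv:2511.15053 — 4 statements merged into one kernel-verified Lean document; each statement's English description precedes it below -/
import Mathlib

section
/- Let E be a real normed vector space, n ∈ ℕ, and B ≥ 0. Let p : Fin (n+1) → E → ℝ be such that for each h, the map p h is differentiable on E, 0 < p h x ≤ 1 for all x ∈ E, and ‖fderiv ℝ (p h) x‖ ≤ B · p h x for all x ∈ E. Then for all x, y ∈ E, |∏_{h} p h x − ∏_{h} p h y| ≤ (n+1) · B · ‖x − y‖. -/
/-!
The bound `‖∇p h‖ ≤ B h * ‖p h‖` on logarithmic gradients is additive over products, so the product
`P` satisfies `‖∇P‖ ≤ (∑ h, B h) * ‖P‖`. The mean value inequality applied to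
`P` itself then turns a bound on `‖P‖` into a Lipschitz constant.
-/

theorem norm_sum_prod_erase_smul_le {ι A V : Type*} [DecidableEq ι]
    [SeminormedCommRing A] [NormMulClass A]
    [SeminormedAddCommGroup V] [Module A V] [IsBoundedSMul A V]
    {t : Finset ι} {a : ι → A} {v : ι → V} {B : ι → ℝ} (hv : ∀ i ∈ t, ‖v i‖ ≤ B i * ‖a i‖) :
    ‖∑ i ∈ t, (∏ j ∈ t.erase i, a j) • v i‖ ≤ (∑ i ∈ t, B i) * ‖∏ i ∈ t, a i‖ := by
  rw [Finset.sum_mul]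
  refine norm_sum_le_of_le t fun i hi => ?_
  calc ‖(∏ j ∈ t.erase i, a j) • v i‖
      ≤ ‖∏ j ∈ t.erase i, a j‖ * ‖v i‖ := norm_smul_le _ _
    _ ≤ ‖∏ j ∈ t.erase i, a j‖ * (B i * ‖a i‖) := by gcongr; exact hv i hi
    _ = B i * ‖(∏ j ∈ t.erase i, a j) * a i‖ := by rw [norm_mul]; ring
    _ = B i * ‖∏ j ∈ t, a j‖ := by rw [Finset.prod_erase_mul t a hi]

theorem stmt_2_general {𝕜 E A ι : Type*} [NontriviallyNormedField 𝕜] [IsRCLikeNormedField 𝕜]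
    [NormedAddCommGroup E] [NormedSpace ℝ E] [NormedSpace 𝕜 E]
    [NormedField A] [NormedAlgebra 𝕜 A]
    {s : Set E} (hs : Convex ℝ s) {t : Finset ι} {p : ι → E → A} {p' : ι → E → E →L[𝕜] A}
    {B : ι → ℝ} {M : ℝ} (hB : ∀ h ∈ t, 0 ≤ B h)
    (hderiv : ∀ h ∈ t, ∀ x ∈ s, HasFDerivWithinAt (p h) (p' h x) s x)
    (hgrad : ∀ h ∈ t, ∀ x ∈ s, ‖p' h x‖ ≤ B h * ‖p h x‖)
    (hprod : ∀ x ∈ s, ‖∏ h ∈ t, p h x‖ ≤ M) {x y : E} (hx : x ∈ s) (hy : y ∈ s) :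
    ‖(∏ h ∈ t, p h x) - ∏ h ∈ t, p h y‖ ≤ (∑ h ∈ t, B h) * M * ‖x - y‖ := by
  classical
  have hderiv_prod : ∀ z ∈ s, HasFDerivWithinAt (fun z => ∏ h ∈ t, p h z)
      (∑ h ∈ t, (∏ k ∈ t.erase h, p k z) • p' h z) s z :=
    fun z hz => HasFDerivWithinAt.finsetProd fun h hh => hderiv h hh z hz
  have hgrad_prod : ∀ z ∈ s, ‖∑ h ∈ t, (∏ k ∈ t.erase h, p k z) • p' h z‖ ≤ (∑ h ∈ t, B h) * M :=
    fun z hz => (norm_sum_prod_erase_smul_le fun h hh => hgrad h hh z hz).trans <|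
      mul_le_mul_of_nonneg_left (hprod z hz) (Finset.sum_nonneg hB)
  exact hs.norm_image_sub_le_of_norm_hasFDerivWithin_le hderiv_prod hgrad_prod hy hx

theorem stmt_2 {E : Type*} [NormedAddCommGroup E] [NormedSpace ℝ E]
    (n : ℕ) (B : ℝ) (hB : 0 ≤ B)
    (p : Fin (n + 1) → E → ℝ)
    (hdiff : ∀ h, Differentiable ℝ (p h))
    (hpos : ∀ h x, 0 < p h x) (hle : ∀ h x, p h x ≤ 1)
    (hgrad : ∀ h x, ‖fderiv ℝ (p h) x‖ ≤ B * p h x) :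
    ∀ x y : E, |(∏ h, p h x) - ∏ h, p h y| ≤ ((n : ℝ) + 1) * B * ‖x - y‖ := by
  intro x y
  have hprod (z : E) : ‖∏ h, p h z‖ ≤ 1 := by
    rw [norm_prod]
    exact Finset.prod_le_one (fun _ _ => norm_nonneg _)
      fun h _ => (Real.norm_of_nonneg (hpos h z).le).trans_le (hle h z)
  simpa using stmt_2_general convex_univ (t := Finset.univ) (B := fun _ => B) (fun _ _ => hB)
    (fun h _ z _ => (hdiff h z).hasFDerivAt.hasFDerivWithinAt)
    (fun h _ z _ => (hgrad h z).trans (mul_le_mul_of_nonneg_left (Real.le_norm_self _) hB))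
    (fun z _ => hprod z) (Set.mem_univ x) (Set.mem_univ y)
end

section
/- Let N ∈ ℕ with N ≥ 1 and fix j ∈ Fin N. Let W : ℕ → Matrix (Fin N) (Fin N) ℝ be a sequence of matrices each of whose column sums equal one, i.e., ∑_{i} W m i l = 1 for all m ∈ ℕ and all l ∈ Fin N. Let μ : ℕ → ℝ with μ 0 = 0, and let x : ℕ → (Fin N → ℝ) satisfy x 0 = 0 and, for all m ∈ ℕ, x (m+1) = (W m).mulVec (x m + (N · (μ (m+1) − μ m)) • Pi.single j 1). Then for every m ∈ ℕ, (1/N) · ∑_{i} x m i = μ m. -/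
open scoped Matrix

section ColumnSums

variable {ι R : Type*} [Fintype ι] [NonAssocSemiring R]

theorem sum_mulVec_of_sum_col_eq_one {κ : Type*} [Fintype κ] {A : Matrix κ ι R}
    (hA : ∀ l, ∑ i, A i l = 1) (v : ι → R) : ∑ i, (A *ᵥ v) i = ∑ l, v l :=
  calc
    ∑ i, (A *ᵥ v) i = ∑ l, ∑ i, A i l * v l := Finset.sum_comm
    _ = ∑ l, v l := by simp only [← Finset.sum_mul, hA, one_mul]

theorem sum_eq_of_mulVec_add_recursion {W : ℕ → Matrix ι ι R} (hW : ∀ m l, ∑ i, W m i l = 1)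
    {x u : ℕ → ι → R} (hx : ∀ m, x (m + 1) = W m *ᵥ (x m + u m))
    {s : ℕ → R} (hs₀ : ∑ i, x 0 i = s 0) (hs : ∀ m, s m + ∑ i, u m i = s (m + 1)) (m : ℕ) :
    ∑ i, x m i = s m := by
  induction m with
  | zero => exact hs₀
  | succ m ih =>
    calc
      ∑ i, x (m + 1) i = ∑ i, (x m + u m) i := by
        rw [hx, sum_mulVec_of_sum_col_eq_one (hW m)]
      _ = ∑ i, x m i + ∑ i, u m i := Finset.sum_add_distrib
      _ = s (m + 1) := by rw [ih, hs]

end ColumnSums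

theorem stmt_8_general {ι K : Type*} [Fintype ι] [DecidableEq ι] [DivisionRing K]
    (hcard : (Fintype.card ι : K) ≠ 0) (j : ι)
    (W : ℕ → Matrix ι ι K) (hW : ∀ m l, ∑ i, W m i l = 1)
    (μ : ℕ → K) (x : ℕ → ι → K) (hx₀ : (1 / (Fintype.card ι : K)) * ∑ i, x 0 i = μ 0)
    (hx : ∀ m, x (m + 1) =
      W m *ᵥ (x m + ((Fintype.card ι : K) * (μ (m + 1) - μ m)) • Pi.single j 1)) (m : ℕ) :
    (1 / (Fintype.card ι : K)) * ∑ i, x m i = μ m := by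
  have sum_initial : ∑ i, x 0 i = Fintype.card ι * μ 0 := by
    rw [← hx₀, one_div, mul_inv_cancel_left₀ hcard]
  have sum_correction (m : ℕ) : Fintype.card ι * μ m +
      ∑ i, (((Fintype.card ι : K) * (μ (m + 1) - μ m)) • (Pi.single j 1 : ι → K)) i =
        Fintype.card ι * μ (m + 1) := by
    simp [← Finset.mul_sum, mul_sub]
  have sum_eq : ∑ i, x m i = Fintype.card ι * μ m :=
    sum_eq_of_mulVec_add_recursion (s := fun m ↦ Fintype.card ι * μ m) hW hx
      sum_initial sum_correction m
  rw [sum_eq, one_div, inv_mul_cancel_left₀ hcard]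

theorem stmt_8 (N : ℕ) (hN : 1 ≤ N) (j : Fin N)
    (W : ℕ → Matrix (Fin N) (Fin N) ℝ)
    (hW : ∀ m l, ∑ i, W m i l = 1)
    (μ : ℕ → ℝ) (hμ0 : μ 0 = 0)
    (x : ℕ → Fin N → ℝ) (hx0 : x 0 = 0)
    (hx : ∀ m, x (m + 1)
      = (W m).mulVec
          (x m + ((N : ℝ) * (μ (m + 1) - μ m)) • (Pi.single j 1 : Fin N → ℝ))) :
    ∀ m, (1 / (N : ℝ)) * ∑ i, x m i = μ m := by
  have hcard : (Fintype.card (Fin N) : ℝ) ≠ 0 := by simpa using Nat.one_le_iff_ne_zero.mp hN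
  simpa using stmt_8_general hcard j W hW μ x (by simp [hx0, hμ0]) (by simpa using hx)
end

section
/- Let E be a real Hilbert space (a complete real inner product space), K ⊆ E a nonempty closed convex set, η > 0 a real number, x ∈ K, and g ∈ E. Let x⁺ ∈ K be the metric projection of x + η • g onto K, i.e., x⁺ ∈ K and ‖(x + η • g) − x⁺‖ ≤ ‖(x + η • g) − y‖ for all y ∈ K. Then for every y ∈ K with ‖y − x‖ ≤ 1, ⟪g, y − x⟫ ≤ (1/η + ‖g‖) · ‖x⁺ − x‖. -/
open Real
open scoped RealInnerProductSpace

section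

variable {E : Type*} [NormedAddCommGroup E] [InnerProductSpace ℝ E]

lemma real_inner_sub_nonpos_of_forall_norm_sub_le {K : Set E} (hK : Convex ℝ K) {u v : E}
    (hv : v ∈ K) (hmin : ∀ w ∈ K, ‖u - v‖ ≤ ‖u - w‖) {w : E} (hw : w ∈ K) :
    ⟪u - v, w - v⟫ ≤ 0 := by
  have : Nonempty K := ⟨⟨v, hv⟩⟩
  have hbdd : BddBelow (Set.range fun w : K ↦ ‖u - w‖) :=
    ⟨0, Set.forall_mem_range.2 fun _ ↦ norm_nonneg _⟩
  have hinf : ‖u - v‖ = ⨅ w : K, ‖u - w‖ :=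
    le_antisymm (le_ciInf fun w ↦ hmin w w.2) (ciInf_le hbdd ⟨v, hv⟩)
  exact (norm_eq_iInf_iff_real_inner_le_zero hK hv).1 hinf w hw

lemma real_inner_sub_le_norm_mul_norm_sub (x y z : E) :
    ⟪z - x, y - z⟫ ≤ ‖z - x‖ * ‖y - x‖ :=
  calc ⟪z - x, y - z⟫ = ⟪z - x, y - x⟫ - ‖z - x‖ ^ 2 := by
        rw [← sub_sub_sub_cancel_right y z x, inner_sub_right, real_inner_self_eq_norm_sq]
    _ ≤ ⟪z - x, y - x⟫ := sub_le_self _ (sq_nonneg _)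
    _ ≤ ‖z - x‖ * ‖y - x‖ := real_inner_le_norm _ _

lemma real_inner_sub_le_of_real_inner_add_smul_sub_nonpos {η : ℝ} (hη : 0 < η) {x g z y : E}
    (h : ⟪x + η • g - z, y - z⟫ ≤ 0) :
    ⟪g, y - z⟫ ≤ ‖z - x‖ * ‖y - x‖ / η := by
  have hsplit : ⟪x + η • g - z, y - z⟫ = η * ⟪g, y - z⟫ - ⟪z - x, y - z⟫ := by
    rw [← real_inner_smul_left, ← inner_sub_left]
    congr 1
    abel
  rw [le_div_iff₀' hη]
  linarith [real_inner_sub_le_norm_mul_norm_sub x y z]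

theorem stmt_11_general {K : Set E} (hK : Convex ℝ K) {η : ℝ} (hη : 0 < η) {x g xp : E}
    (hxp : xp ∈ K) (hproj : ∀ y ∈ K, ‖(x + η • g) - xp‖ ≤ ‖(x + η • g) - y‖)
    {y : E} (hy : y ∈ K) :
    ⟪g, y - x⟫ ≤ (‖y - x‖ / η + ‖g‖) * ‖xp - x‖ := by
  have hvar : ⟪x + η • g - xp, y - xp⟫ ≤ 0 :=
    real_inner_sub_nonpos_of_forall_norm_sub_le hK hxp hproj hy
  calc ⟪g, y - x⟫ = ⟪g, y - xp⟫ + ⟪g, xp - x⟫ := by rw [← inner_add_right, sub_add_sub_cancel]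
    _ ≤ ‖xp - x‖ * ‖y - x‖ / η + ‖g‖ * ‖xp - x‖ :=
      add_le_add (real_inner_sub_le_of_real_inner_add_smul_sub_nonpos hη hvar)
        (real_inner_le_norm _ _)
    _ = (‖y - x‖ / η + ‖g‖) * ‖xp - x‖ := by ring

end

theorem stmt_11 {E : Type*} [NormedAddCommGroup E] [InnerProductSpace ℝ E] [CompleteSpace E]
    (K : Set E) (hKne : K.Nonempty) (hKcl : IsClosed K) (hKconv : Convex ℝ K)
    (η : ℝ) (hη : 0 < η) (x : E) (hx : x ∈ K) (g : E) (xp : E) (hxp : xp ∈ K)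
    (hproj : ∀ y ∈ K, ‖(x + η • g) - xp‖ ≤ ‖(x + η • g) - y‖) :
    ∀ y ∈ K, ‖y - x‖ ≤ 1 → ⟪g, y - x⟫ ≤ (1 / η + ‖g‖) * ‖xp - x‖ := by
  intro y hy hyx
  exact (stmt_11_general hKconv hη hxp hproj hy).trans (by gcongr)
end

section
/- Let E be a real Hilbert space (a complete real inner product space), K ⊆ E a nonempty closed convex set, η > 0 a real number, x ∈ K, and g, v ∈ E. Let x⁺ ∈ K be the metric projection of x + η • g onto K, i.e., x⁺ ∈ K and ‖(x + η • g) − x⁺‖ ≤ ‖(x + η • g) − y‖ for all y ∈ K. Then (sSup {⟪v, y − x⁺⟫ | y ∈ K, ‖y − x⁺‖ ≤ 1})² ≤ (2/η²) · ‖x⁺ − x‖² + 2 · ‖v − g‖². (The supremum is over a nonempty set containing the value 0, attained at y = x⁺, and is bounded above by ‖v‖.) -/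
open scoped RealInnerProductSpace

/-!
The stationarity measure at a point of `K` is `1`-Lipschitz in the direction, so replacing `v` by
`g` costs at most `‖v - g‖`. For `g` itself, the variational inequality of the projection gives
`η ⟪g, y - xp⟫ ≤ ⟪xp - x, y - xp⟫ ≤ ‖xp - x‖` whenever `y ∈ K` and `‖y - xp‖ ≤ 1`. Squaring
`‖xp - x‖ / η + ‖v - g‖` with `(a + b)² ≤ 2a² + 2b²` yields the bound.
-/

section

variable {E : Type*} [NormedAddCommGroup E] [InnerProductSpace ℝ E]
  {K : Set E} {p x g v w y : E} {η B : ℝ}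

/-- The first-order stationarity measure (the paper's `𝒳`) at `p` for maximizing over `K` a function
with gradient `v` at `p`: the largest linearized increase over steps of length at most `1` that stay
in `K`. It is the intended supremum when `p ∈ K`; if no such step exists it is `sSup ∅ = 0`. -/
noncomputable def stationarityMeasure (K : Set E) (v p : E) : ℝ :=
  sSup {r : ℝ | ∃ y ∈ K, ‖y - p‖ ≤ 1 ∧ r = ⟪v, y - p⟫}

theorem real_inner_le_norm_of_norm_le_one (hw : ‖w‖ ≤ 1) : ⟪v, w⟫ ≤ ‖v‖ :=
  (real_inner_le_norm v w).trans (mul_le_of_le_one_right (norm_nonneg v) hw)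

theorem inner_le_stationarityMeasure (hy : y ∈ K) (hyp : ‖y - p‖ ≤ 1) :
    ⟪v, y - p⟫ ≤ stationarityMeasure K v p := by
  refine le_csSup ⟨‖v‖, ?_⟩ ⟨y, hy, hyp, rfl⟩
  rintro _ ⟨z, -, hzp, rfl⟩
  exact real_inner_le_norm_of_norm_le_one hzp

theorem stationarityMeasure_le (hp : p ∈ K)
    (hB : ∀ y ∈ K, ‖y - p‖ ≤ 1 → ⟪v, y - p⟫ ≤ B) : stationarityMeasure K v p ≤ B := by
  refine csSup_le ⟨_, p, hp, by simp, rfl⟩ ?_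
  rintro _ ⟨y, hy, hyp, rfl⟩
  exact hB y hy hyp

theorem stationarityMeasure_nonneg (hp : p ∈ K) : 0 ≤ stationarityMeasure K v p := by
  simpa using inner_le_stationarityMeasure (v := v) hp (by simp : ‖p - p‖ ≤ 1)

theorem stationarityMeasure_le_add_norm_sub (hp : p ∈ K) :
    stationarityMeasure K v p ≤ stationarityMeasure K g p + ‖v - g‖ := by
  refine stationarityMeasure_le hp fun y hy hyp => ?_
  calc ⟪v, y - p⟫ = ⟪g, y - p⟫ + ⟪v - g, y - p⟫ := by rw [← inner_add_left, add_sub_cancel]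
    _ ≤ stationarityMeasure K g p + ‖v - g‖ :=
      add_le_add (inner_le_stationarityMeasure hy hyp) (real_inner_le_norm_of_norm_le_one hyp)

theorem real_inner_sub_nonpos_of_forall_norm_sub_le_s13 (hK : Convex ℝ K) (hp : p ∈ K)
    (hmin : ∀ y ∈ K, ‖x - p‖ ≤ ‖x - y‖) (hy : y ∈ K) : ⟪x - p, y - p⟫ ≤ 0 := by
  have : Nonempty K := ⟨⟨p, hp⟩⟩
  have hbdd : BddBelow (Set.range fun y : K => ‖x - y‖) :=
    ⟨0, Set.forall_mem_range.2 fun _ => norm_nonneg _⟩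
  have hinf : ‖x - p‖ = ⨅ y : K, ‖x - y‖ :=
    le_antisymm (le_ciInf fun y => hmin y y.2) (ciInf_le hbdd ⟨p, hp⟩)
  exact (norm_eq_iInf_iff_real_inner_le_zero hK hp).1 hinf y hy

theorem stationarityMeasure_le_norm_sub_div (hK : Convex ℝ K) (hη : 0 < η) (hp : p ∈ K)
    (hproj : ∀ y ∈ K, ‖(x + η • g) - p‖ ≤ ‖(x + η • g) - y‖) :
    stationarityMeasure K g p ≤ ‖p - x‖ / η := by
  refine stationarityMeasure_le hp fun y hy hyp => ?_
  have hvar : ⟪η • g - (p - x), y - p⟫ ≤ 0 := by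
    rw [show η • g - (p - x) = x + η • g - p by abel]
    exact real_inner_sub_nonpos_of_forall_norm_sub_le_s13 hK hp hproj hy
  rw [inner_sub_left, real_inner_smul_left, sub_nonpos] at hvar
  rw [le_div_iff₀' hη]
  exact hvar.trans (real_inner_le_norm_of_norm_le_one hyp)

theorem stmt_13_general (hK : Convex ℝ K) (hη : 0 < η) (hp : p ∈ K)
    (hproj : ∀ y ∈ K, ‖(x + η • g) - p‖ ≤ ‖(x + η • g) - y‖) :
    stationarityMeasure K v p ^ 2 ≤ (2 / η ^ 2) * ‖p - x‖ ^ 2 + 2 * ‖v - g‖ ^ 2 := by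
  have hle : stationarityMeasure K v p ≤ ‖p - x‖ / η + ‖v - g‖ :=
    (stationarityMeasure_le_add_norm_sub hp).trans
      (add_le_add_left (stationarityMeasure_le_norm_sub_div hK hη hp hproj) _)
  calc stationarityMeasure K v p ^ 2
      ≤ (‖p - x‖ / η + ‖v - g‖) ^ 2 := pow_le_pow_left₀ (stationarityMeasure_nonneg hp) hle 2
    _ ≤ 2 * ((‖p - x‖ / η) ^ 2 + ‖v - g‖ ^ 2) := add_sq_le
    _ = (2 / η ^ 2) * ‖p - x‖ ^ 2 + 2 * ‖v - g‖ ^ 2 := by ring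

end

theorem stmt_13 {E : Type*} [NormedAddCommGroup E] [InnerProductSpace ℝ E] [CompleteSpace E]
    (K : Set E) (hKne : K.Nonempty) (hKcl : IsClosed K) (hKconv : Convex ℝ K)
    (η : ℝ) (hη : 0 < η) (x : E) (hx : x ∈ K) (g v : E) (xp : E) (hxp : xp ∈ K)
    (hproj : ∀ y ∈ K, ‖(x + η • g) - xp‖ ≤ ‖(x + η • g) - y‖) :
    (sSup {r : ℝ | ∃ y ∈ K, ‖y - xp‖ ≤ 1 ∧ r = ⟪v, y - xp⟫}) ^ 2
      ≤ (2 / η ^ 2) * ‖xp - x‖ ^ 2 + 2 * ‖v - g‖ ^ 2 :=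
  stmt_13_general hKconv hη hxp hproj
end
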